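/- arXiv:2411.03809 — 2 statements merged into one kernel-verified Lean document; each statement's English description precedes it below -/
import Mathlib

section
/- Let S : [0,∞) → ℂ be Lipschitz continuous. Then its Laplace transform L{S;s} = ∫_0^∞ e^{-su} S(u) du converges for Re s > 0, and if L{S;·} admits a continuous extension to the closed half-plane {s ∈ ℂ : Re s ≥ 0} (i.e. there exists a continuous function on {Re s ≥ 0} agreeing with L{S;·} on {Re s > 0}), then S(x) → 0 as x → ∞. -/
open MeasureTheory Filter

lemma ik_kernel : ∃ ψ φ : ℝ → ℂ, Continuous ψ ∧ HasCompactSupport ψ ∧ Continuous φ ∧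
    Integrable φ ∧ Integrable (fun y : ℝ => |y| * ‖φ y‖) ∧ ∫ y, φ y = 1 ∧
    ∀ y : ℝ, φ y = ∫ t : ℝ, Complex.exp (-(2 * Real.pi * t * Complex.I) * y) * ψ t := by
  let b : ContDiffBump (0:ℝ) := ⟨1, 2, one_pos, one_lt_two⟩
  have hc : HasCompactSupport (fun x : ℝ => ((b x : ℝ) : ℂ)) :=
    b.hasCompactSupport.comp_left (g := fun x : ℝ => (x : ℂ)) (by simp)
  have hd : ContDiff ℝ ((⊤ : ℕ∞) : WithTop ℕ∞) (fun x : ℝ => ((b x : ℝ) : ℂ)) :=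
    Complex.ofRealCLM.contDiff.comp b.contDiff
  let ψ : SchwartzMap ℝ ℂ := hc.toSchwartzMap hd
  have hψ : ∀ x, ψ x = ((b x : ℝ) : ℂ) := fun x => rfl
  let φ : SchwartzMap ℝ ℂ := FourierTransform.fourier ψ
  have hφ : ∀ y : ℝ, φ y = ∫ t : ℝ, Complex.exp (-(2 * Real.pi * t * Complex.I) * y) * ψ t := by
    intro y
    change (FourierTransform.fourier ψ : SchwartzMap ℝ ℂ) y = _
    rw [SchwartzMap.fourier_coe, Real.fourier_real_eq_integral_exp_smul]
    refine integral_congr_ae (Eventually.of_forall fun t => ?_)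
    simp only [smul_eq_mul]
    congr 2
    push_cast
    ring
  refine ⟨ψ, φ, ψ.continuous, hc, φ.continuous, φ.integrable, ?_, ?_, hφ⟩
  · simpa using φ.integrable_pow_mul volume 1
  · have h1 : (FourierTransformInv.fourierInv φ : SchwartzMap ℝ ℂ) = ψ :=
      FourierTransform.fourierInv_fourier_eq ψ
    have h2 := congrArg (fun f : SchwartzMap ℝ ℂ => f 0) h1
    simp only [SchwartzMap.fourierInv_coe, Real.fourierInv_eq'] at h2
    have h3 : ψ 0 = 1 := by
      rw [hψ, b.one_of_mem_closedBall (by simp [b])]; simp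
    simpa [h3] using h2

lemma ik_bound {S : ℝ → ℂ} {K : NNReal} (hS : LipschitzOnWith K S (Set.Ici 0)) {u : ℝ}
    (hu : 0 ≤ u) : ‖S u‖ ≤ ‖S 0‖ + K * u := by
  have := hS.dist_le_mul u hu 0 (by simp)
  rw [dist_eq_norm, Real.dist_eq, sub_zero, abs_of_nonneg hu] at this
  have h2 := norm_add_le (S 0) (S u - S 0)
  rw [add_sub_cancel] at h2
  linarith

lemma ik_meas {S : ℝ → ℂ} {K : NNReal} (hS : LipschitzOnWith K S (Set.Ici 0)) :
    AEStronglyMeasurable S (volume.restrict (Set.Ioi 0)) :=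
  (hS.continuousOn.mono Set.Ioi_subset_Ici_self).aestronglyMeasurable measurableSet_Ioi

lemma ik_int {S : ℝ → ℂ} {K : NNReal} (hS : LipschitzOnWith K S (Set.Ici 0)) (s : ℂ)
    (hs : 0 < s.re) :
    IntegrableOn (fun u : ℝ => Complex.exp (-s * u) * S u) (Set.Ioi 0) := by
  have h0 : IntegrableOn (fun u : ℝ => (‖S 0‖ + K * (2 / s.re)) * Real.exp (-(s.re / 2) * u))
      (Set.Ioi 0) := (integrableOn_exp_mul_Ioi (by linarith) 0).const_mul _
  refine Integrable.mono' h0 ?_ ?_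
  · exact (Continuous.aestronglyMeasurable (by fun_prop)).mul (ik_meas hS)
  · refine (ae_restrict_iff' measurableSet_Ioi).2 (Eventually.of_forall fun u hu => ?_)
    have hu : 0 < u := hu
    rw [norm_mul, Complex.norm_exp]
    have e1 : (-s * (u:ℂ)).re = -(s.re / 2) * u + -(s.re/2) * u := by simp; ring
    rw [e1, Real.exp_add]
    have hb := ik_bound hS hu.le
    have h1 : s.re / 2 * u * Real.exp (-(s.re/2)*u) ≤ 1 := by
      have h := Real.add_one_le_exp (s.re/2 * u)
      have : Real.exp (s.re/2*u) * Real.exp (-(s.re/2)*u) = 1 := by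
        rw [← Real.exp_add]; simp
      have hp := Real.exp_pos (-(s.re/2)*u)
      nlinarith
    have h2 : Real.exp (-(s.re/2)*u) ≤ 1 := by
      apply Real.exp_le_one_iff.2
      nlinarith
    have h3 : u * Real.exp (-(s.re/2)*u) ≤ 2 / s.re := by
      rw [le_div_iff₀ hs]; linarith
    have h4 : Real.exp (-(s.re/2)*u) * ‖S u‖ ≤ ‖S 0‖ + K * (2 / s.re) := by
      have hp := Real.exp_pos (-(s.re/2)*u)
      have hK : (0:ℝ) ≤ K := K.2
      calc _ ≤ Real.exp (-(s.re/2)*u) * (‖S 0‖ + K * u) := by gcongr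
        _ = Real.exp (-(s.re/2)*u) * ‖S 0‖ + K * (u * Real.exp (-(s.re/2)*u)) := by ring
        _ ≤ 1 * ‖S 0‖ + K * (2 / s.re) := by gcongr
        _ = _ := by ring
    nlinarith [Real.exp_pos (-(s.re/2)*u)]

/-- integrability of `S u * φ (u - x)` with linear growth. -/
lemma ik_intφ {φ : ℝ → ℂ} (hφ : Integrable φ)
    (hφ1 : Integrable (fun y : ℝ => |y| * ‖φ y‖)) (a b : ℝ) (x : ℝ) :
    Integrable (fun u : ℝ => (a + b * |u - x|) * ‖φ (u - x)‖) := by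
  have h : Integrable (fun y : ℝ => (a + b * |y|) * ‖φ y‖) := by
    have := (hφ.norm.const_mul a).add (hφ1.const_mul b)
    refine this.congr (Eventually.of_forall fun y => ?_)
    simp; ring
  exact h.comp_sub_right x

lemma ik_fubini {S : ℝ → ℂ} {K : NNReal} (hS : LipschitzOnWith K S (Set.Ici 0))
    {g : ℂ → ℂ}
    (hg : ∀ s : ℂ, 0 < s.re → g s = ∫ u in Set.Ioi (0:ℝ), Complex.exp (-s * u) * S u)
    {ψ φ : ℝ → ℂ} (hψ : Continuous ψ) (hψc : HasCompactSupport ψ)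
    (hφψ : ∀ y : ℝ, φ y = ∫ t : ℝ, Complex.exp (-(2 * Real.pi * t * Complex.I) * y) * ψ t)
    (x σ : ℝ) (hσ : 0 < σ) :
    ∫ u in Set.Ioi (0:ℝ), Complex.exp (-(σ:ℂ) * u) * S u * φ (u - x) =
    ∫ t : ℝ, Complex.exp ((2 * Real.pi * t * Complex.I) * x) *
      (ψ t * g (σ + 2 * Real.pi * t * Complex.I)) := by
  have hi := ik_int hS (σ:ℂ) (by simpa using hσ)
  have hψi : Integrable ψ := hψ.integrable_of_hasCompactSupport hψc
  have hprod := Integrable.mul_prod hi hψi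
  have h2 : Integrable (Function.uncurry fun (u t : ℝ) =>
      Complex.exp (-(2 * Real.pi * t * Complex.I) * ((u:ℂ) - x)) *
        (Complex.exp (-(σ:ℂ) * u) * S u * ψ t))
      ((volume.restrict (Set.Ioi (0:ℝ))).prod volume) := by
    refine hprod.norm.mono' ?_ ?_
    · refine AEStronglyMeasurable.mul (Continuous.aestronglyMeasurable ?_) hprod.1
      fun_prop
    · refine Eventually.of_forall fun ⟨u, t⟩ => ?_
      simp only [Function.uncurry]
      rw [norm_mul (Complex.exp (-(2 * Real.pi * t * Complex.I) * ((u:ℂ) - x))), Complex.norm_exp]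
      simp
  have h3 := integral_integral_swap h2
  calc _ = ∫ u in Set.Ioi (0:ℝ), ∫ t : ℝ,
      Complex.exp (-(2 * Real.pi * t * Complex.I) * ((u:ℂ) - x)) *
        (Complex.exp (-(σ:ℂ) * u) * S u * ψ t) := by
        refine integral_congr_ae (Eventually.of_forall fun u => ?_)
        simp only
        rw [hφψ, ← integral_const_mul]
        refine integral_congr_ae (Eventually.of_forall fun t => ?_)
        simp only
        push_cast
        ring
    _ = _ := h3
    _ = _ := by
        refine integral_congr_ae (Eventually.of_forall fun t => ?_)
        simp only
        rw [hg _ (by simpa using hσ), ← integral_const_mul, ← integral_const_mul]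
        refine integral_congr_ae (Eventually.of_forall fun u => ?_)
        simp only
        have : Complex.exp (-(2 * Real.pi * t * Complex.I) * ((u:ℂ) - x)) * Complex.exp (-(σ:ℂ) * u)
          = Complex.exp ((2 * Real.pi * t * Complex.I) * x) *
            Complex.exp (-(σ + 2 * Real.pi * t * Complex.I) * u) := by
          rw [← Complex.exp_add, ← Complex.exp_add]; congr 1; ring
        linear_combination (S u * ψ t) * this

lemma ik_dom {S : ℝ → ℂ} {K : NNReal} (hS : LipschitzOnWith K S (Set.Ici 0)) (φ : ℝ → ℂ)
    (x u : ℝ) (hu : 0 ≤ u) :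
    ‖S u * φ (u - x)‖ ≤ ((‖S 0‖ + K * |x|) + K * |u - x|) * ‖φ (u - x)‖ := by
  rw [norm_mul]
  have h := ik_bound hS hu
  have h1 : u ≤ |x| + |u - x| := by
    have := le_abs_self x
    have := le_abs_self (u - x)
    linarith
  have hK : (0:ℝ) ≤ K := K.2
  have : (K:ℝ) * u ≤ K * (|x| + |u - x|) := by gcongr
  gcongr
  linarith

lemma ik_conv {S : ℝ → ℂ} {K : NNReal} (hS : LipschitzOnWith K S (Set.Ici 0))
    {g : ℂ → ℂ} (hgc : ContinuousOn g {s : ℂ | 0 ≤ s.re})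
    (hg : ∀ s : ℂ, 0 < s.re → g s = ∫ u in Set.Ioi (0:ℝ), Complex.exp (-s * u) * S u)
    {ψ φ : ℝ → ℂ} (hψ : Continuous ψ) (hψc : HasCompactSupport ψ)
    (hφc : Continuous φ) (hφ : Integrable φ)
    (hφ1 : Integrable (fun y : ℝ => |y| * ‖φ y‖))
    (hφψ : ∀ y : ℝ, φ y = ∫ t : ℝ, Complex.exp (-(2 * Real.pi * t * Complex.I) * y) * ψ t)
    (x : ℝ) :
    ∫ u in Set.Ioi (0:ℝ), S u * φ (u - x) =
    ∫ t : ℝ, Complex.exp ((2 * Real.pi * t * Complex.I) * x) *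
      (ψ t * g (2 * Real.pi * t * Complex.I)) := by
  let σ : ℕ → ℝ := fun n => 1 / ((n:ℝ) + 1)
  have hσ0 : ∀ n, 0 < σ n := fun n => by positivity
  have hσ1 : ∀ n, σ n ≤ 1 := fun n => by
    simp only [σ]
    rw [div_le_one (by positivity)]
    have : (0:ℝ) ≤ n := by positivity
    linarith
  have hσ : Tendsto σ atTop (nhds 0) := tendsto_one_div_add_atTop_nhds_zero_nat
  have hψi : Integrable ψ := hψ.integrable_of_hasCompactSupport hψc
  have hL : Tendsto (fun n => ∫ u in Set.Ioi (0:ℝ),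
      Complex.exp (-(σ n:ℂ) * u) * S u * φ (u - x)) atTop
      (nhds (∫ u in Set.Ioi (0:ℝ), S u * φ (u - x))) := by
    refine tendsto_integral_of_dominated_convergence
      (fun u => ((‖S 0‖ + K * |x|) + K * |u - x|) * ‖φ (u - x)‖) ?_ ?_ ?_ ?_
    · intro n
      exact ((Continuous.aestronglyMeasurable (by fun_prop)).mul (ik_meas hS)).mul
        (Continuous.aestronglyMeasurable (by fun_prop))
    · exact (ik_intφ hφ hφ1 _ _ x).integrableOn
    · intro n
      refine (ae_restrict_iff' measurableSet_Ioi).2 (Eventually.of_forall fun u hu => ?_)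
      have hu : 0 < u := hu
      refine le_trans ?_ (ik_dom hS φ x u hu.le)
      rw [mul_assoc, norm_mul, Complex.norm_exp]
      have : Real.exp (-(σ n:ℂ) * u).re ≤ 1 := by
        apply Real.exp_le_one_iff.2
        simp only [Complex.mul_re, Complex.neg_re, Complex.ofReal_re, Complex.neg_im,
          Complex.ofReal_im]
        nlinarith [hσ0 n]
      exact mul_le_of_le_one_left (norm_nonneg _) this
    · refine Eventually.of_forall fun u => ?_
      have h : Continuous fun r : ℝ => Complex.exp (-(r:ℂ) * u) * S u * φ (u - x) := by fun_prop
      simpa [Function.comp_def] using (h.tendsto 0).comp hσ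
  have hR : Tendsto (fun n => ∫ t : ℝ, Complex.exp ((2 * Real.pi * t * Complex.I) * x) *
      (ψ t * g (σ n + 2 * Real.pi * t * Complex.I))) atTop
      (nhds (∫ t : ℝ, Complex.exp ((2 * Real.pi * t * Complex.I) * x) *
      (ψ t * g (2 * Real.pi * t * Complex.I)))) := by
    have hgcomp : ∀ r : ℝ, 0 ≤ r → Continuous fun t : ℝ => g (r + 2 * Real.pi * t * Complex.I) := by
      intro r hr
      exact hgc.comp_continuous (by fun_prop) (fun t => by simpa using hr)
    have hcomp : IsCompact (Set.Icc (0:ℝ) 1 ×ˢ tsupport ψ) := isCompact_Icc.prod hψc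
    obtain ⟨M, hM⟩ := hcomp.exists_bound_of_continuousOn
      (f := fun p : ℝ × ℝ => g (p.1 + 2 * Real.pi * p.2 * Complex.I))
      (hgc.comp (Continuous.continuousOn (by fun_prop)) (fun p hp => by simpa using hp.1.1))
    refine tendsto_integral_of_dominated_convergence (fun t => M * ‖ψ t‖) ?_ ?_ ?_ ?_
    · intro n
      have := hgcomp (σ n) (hσ0 n).le
      exact Continuous.aestronglyMeasurable
        (Continuous.mul (by fun_prop) (hψ.mul this))
    · exact hψi.norm.const_mul M
    · intro n
      refine Eventually.of_forall fun t => ?_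
      have h1 : ‖Complex.exp ((2 * Real.pi * t * Complex.I) * x)‖ = 1 := by
        rw [Complex.norm_exp]; simp
      rw [norm_mul, h1, one_mul, norm_mul, mul_comm]
      by_cases ht : t ∈ tsupport ψ
      · gcongr
        exact hM (σ n, t) ⟨⟨(hσ0 n).le, hσ1 n⟩, ht⟩
      · simp [image_eq_zero_of_notMem_tsupport ht]
    · refine Eventually.of_forall fun t => ?_
      refine Tendsto.const_mul _ (Tendsto.const_mul _ ?_)
      have h1 : ContinuousOn (fun r : ℝ => g (r + 2 * Real.pi * t * Complex.I)) (Set.Ici 0) :=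
        hgc.comp (Continuous.continuousOn (by fun_prop)) (fun p hp => by simpa using hp)
      have h2 := h1 0 (by simp)
      have h3 : Tendsto σ atTop (nhdsWithin 0 (Set.Ici 0)) :=
        tendsto_nhdsWithin_iff.2 ⟨hσ, Eventually.of_forall fun n => (hσ0 n).le⟩
      simpa [Function.comp_def] using h2.tendsto.comp h3
  refine tendsto_nhds_unique hL (hR.congr fun n => ?_)
  exact (ik_fubini hS hg hψ hψc hφψ x (σ n) (hσ0 n)).symm

lemma ik_RL (f : ℝ → ℂ) :
    Tendsto (fun x : ℝ => ∫ t : ℝ, Complex.exp ((2 * Real.pi * t * Complex.I) * x) * f t)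
      atTop (nhds 0) := by
  have h := Real.tendsto_integral_exp_smul_cocompact f
  have h2 : Tendsto (fun x : ℝ => -x) atTop (cocompact ℝ) :=
    tendsto_neg_atTop_atBot.mono_right atBot_le_cocompact
  refine (h.comp h2).congr fun x => ?_
  simp only [Function.comp]
  refine integral_congr_ae (Eventually.of_forall fun t => ?_)
  simp only [Circle.smul_def, Real.fourierChar_apply, smul_eq_mul]
  congr 2
  push_cast
  ring

lemma ik_taub {S : ℝ → ℂ} {K : NNReal} (hS : LipschitzOnWith K S (Set.Ici 0))
    {φ : ℝ → ℂ} (hφc : Continuous φ) (hφ : Integrable φ)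
    (hφ1 : Integrable (fun y : ℝ => |y| * ‖φ y‖)) (hφ2 : ∫ y, φ y = 1) (x : ℝ) (hx : 0 < x) :
    ‖S x‖ ≤ ‖∫ u in Set.Ioi (0:ℝ), S u * φ (u - x)‖ +
      (K + (‖S 0‖ / x + K)) * ∫ y : ℝ, |y| * ‖φ y‖ := by
  have hK : (0:ℝ) ≤ K := K.2
  have hS1 : IntegrableOn (fun u => S u * φ (u - x)) (Set.Ioi 0) := by
    refine Integrable.mono' (ik_intφ hφ hφ1 (‖S 0‖ + K * |x|) K x).integrableOn
      ((ik_meas hS).mul (Continuous.aestronglyMeasurable (by fun_prop))) ?_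
    exact (ae_restrict_iff' measurableSet_Ioi).2
      (Eventually.of_forall fun u hu => ik_dom hS φ x u (le_of_lt hu))
  have hS2 : Integrable (fun u => S x * φ (u - x)) := (hφ.comp_sub_right x).const_mul _
  have e1 : S x = ∫ u, S x * φ (u - x) := by
    rw [integral_const_mul, integral_sub_right_eq_self φ x, hφ2, mul_one]
  let F : ℝ → ℂ := fun u => S x * φ (u - x) - (Set.Ioi (0:ℝ)).indicator (fun u => S u * φ (u - x)) u
  have hF : S x - ∫ u in Set.Ioi (0:ℝ), S u * φ (u - x) = ∫ u, F u := by
    simp only [F]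
    rw [integral_sub hS2 (hS1.integrable_indicator measurableSet_Ioi),
      integral_indicator measurableSet_Ioi, ← e1]
  have hFb : ∀ u, ‖F u‖ ≤ (K + (‖S 0‖ / x + K)) * (|u - x| * ‖φ (u - x)‖) := by
    intro u
    have hq : 0 ≤ ‖S 0‖ / x := by positivity
    by_cases hu : 0 < u
    · have : F u = (S x - S u) * φ (u - x) := by
        simp [F, hu]; ring
      rw [this, norm_mul, ← mul_assoc]
      gcongr
      have := hS.dist_le_mul x hx.le u hu.le
      rw [dist_eq_norm, Real.dist_eq, abs_sub_comm] at this
      refine this.trans ?_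
      gcongr
      linarith
    · have : F u = S x * φ (u - x) := by simp [F, hu]
      rw [this, norm_mul, ← mul_assoc]
      gcongr
      have h1 := ik_bound hS hx.le
      have h2 : x ≤ |u - x| := by
        rw [abs_sub_comm]; refine le_trans ?_ (le_abs_self _); linarith
      calc ‖S x‖ ≤ (‖S 0‖ / x + K) * x := by rw [add_mul, div_mul_cancel₀ _ hx.ne']; exact h1
        _ ≤ (K + (‖S 0‖ / x + K)) * |u - x| := by
          exact mul_le_mul (by linarith) h2 hx.le (by positivity)
  have h5 : ‖∫ u, F u‖ ≤ (K + (‖S 0‖ / x + K)) * ∫ y : ℝ, |y| * ‖φ y‖ := by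
    have := norm_integral_le_of_norm_le ((hφ1.comp_sub_right x).const_mul (K + (‖S 0‖ / x + K)))
      (Eventually.of_forall hFb)
    rwa [integral_const_mul, integral_sub_right_eq_self (fun y : ℝ => |y| * ‖φ y‖) x] at this
  rw [← hF] at h5
  have := norm_add_le (∫ u in Set.Ioi (0:ℝ), S u * φ (u - x))
    (S x - ∫ u in Set.Ioi (0:ℝ), S u * φ (u - x))
  rw [add_sub_cancel] at this
  linarith

/-- A universal bound for the eventual size of `S`. -/
lemma ik_key : ∃ C : ℝ, 0 ≤ C ∧ ∀ (S : ℝ → ℂ) (K : NNReal), LipschitzOnWith K S (Set.Ici 0) →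
    (∃ g : ℂ → ℂ, ContinuousOn g {s : ℂ | 0 ≤ s.re} ∧
        ∀ s : ℂ, 0 < s.re → g s = ∫ u in Set.Ioi (0:ℝ), Complex.exp (-s * u) * S u) →
    ∀ ε > 0, ∀ᶠ x in atTop, ‖S x‖ < C * K + ε := by
  obtain ⟨ψ, φ, hψ, hψc, hφc, hφ, hφ1, hφ2, hφψ⟩ := ik_kernel
  refine ⟨2 * ∫ y : ℝ, |y| * ‖φ y‖, ?_, ?_⟩
  · have : 0 ≤ ∫ y : ℝ, |y| * ‖φ y‖ := integral_nonneg fun y => by positivity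
    linarith
  rintro S K hS ⟨g, hgc, hg⟩ ε hε
  set M := ∫ y : ℝ, |y| * ‖φ y‖ with hM
  have h1 : Tendsto (fun x : ℝ => ∫ u in Set.Ioi (0:ℝ), S u * φ (u - x)) atTop (nhds 0) := by
    refine (ik_RL (fun t => ψ t * g (2 * Real.pi * t * Complex.I))).congr fun x => ?_
    exact (ik_conv hS hgc hg hψ hψc hφc hφ hφ1 hφψ x).symm
  have h2 : Tendsto (fun x : ℝ => ‖∫ u in Set.Ioi (0:ℝ), S u * φ (u - x)‖ +
      (K + (‖S 0‖ / x + K)) * M) atTop (nhds (‖(0:ℂ)‖ + (K + (0 + K)) * M)) := by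
    refine h1.norm.add (Tendsto.mul_const _ (Tendsto.const_add _ (Tendsto.add_const _ ?_)))
    exact tendsto_const_nhds.div_atTop tendsto_id
  have h3 := h2.eventually_lt_const (u := 2 * M * K + ε) (by simp; nlinarith)
  filter_upwards [h3, eventually_gt_atTop 0] with x hx hx0
  exact (ik_taub hS hφc hφ hφ1 hφ2 x hx0).trans_lt hx

/-- **Ingham–Karamata theorem.** If `S : [0,∞) → ℂ` is Lipschitz continuous, then its Laplace
transform converges on `Re s > 0`, and if the Laplace transform admits a continuous extension
to the closed half-plane `{Re s ≥ 0}`, then `S(x) → 0` as `x → ∞`. -/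
theorem stmt_0 (S : ℝ → ℂ) (K : NNReal) (hS : LipschitzOnWith K S (Set.Ici 0)) :
    (∀ s : ℂ, 0 < s.re →
      IntegrableOn (fun u : ℝ => Complex.exp (-s * u) * S u) (Set.Ioi 0)) ∧
    ((∃ g : ℂ → ℂ, ContinuousOn g {s : ℂ | 0 ≤ s.re} ∧
        ∀ s : ℂ, 0 < s.re → g s = ∫ u in Set.Ioi (0:ℝ), Complex.exp (-s * u) * S u) →
      Tendsto S atTop (nhds 0)) := by
  refine ⟨fun s hs => ik_int hS s hs, ?_⟩
  rintro ⟨g, hgc, hg⟩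
  obtain ⟨C, hC, hkey⟩ := ik_key
  rw [Metric.tendsto_nhds]
  intro ε hε
  have hK : (0:ℝ) ≤ K := K.2
  -- scaling factor `r`
  obtain ⟨r, hr, hr2⟩ : ∃ r : ℝ, 0 < r ∧ C * (K * r) < ε / 2 := by
    refine ⟨ε / 2 / (C * K + 1), by positivity, ?_⟩
    rw [← mul_assoc, ← mul_div_assoc, div_lt_iff₀ (by positivity)]
    nlinarith
  let r' : NNReal := ⟨r, hr.le⟩
  have hT : LipschitzOnWith (K * r') (fun u => S (r * u)) (Set.Ici 0) := by
    refine LipschitzOnWith.of_dist_le_mul fun u hu v hv => ?_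
    refine (hS.dist_le_mul (r * u) (mul_nonneg hr.le hu) (r * v) (mul_nonneg hr.le hv)).trans ?_
    rw [Real.dist_eq, Real.dist_eq, ← mul_sub, abs_mul, abs_of_pos hr, ← mul_assoc]
    rfl
  have hex := hkey _ _ hT ⟨fun s => ((r⁻¹ : ℝ) : ℂ) * g (((r⁻¹ : ℝ) : ℂ) * s), ?_, ?_⟩ (ε / 2) (by positivity)
  · have h4 : Tendsto (fun x : ℝ => r⁻¹ * x) atTop atTop :=
      tendsto_id.const_mul_atTop (by positivity)
    filter_upwards [h4.eventually hex] with x hx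
    rw [mul_inv_cancel_left₀ hr.ne'] at hx
    rw [dist_zero_right]
    have : ((K * r' : NNReal) : ℝ) = K * r := rfl
    rw [this] at hx
    linarith
  · refine ContinuousOn.mul continuousOn_const (hgc.comp (by fun_prop) fun s hs => ?_)
    have hs : 0 ≤ s.re := hs
    change 0 ≤ (((r⁻¹ : ℝ) : ℂ) * s).re
    rw [Complex.re_ofReal_mul]
    positivity
  · intro s hs
    have h5 : 0 < (((r⁻¹ : ℝ) : ℂ) * s).re := by
      rw [Complex.re_ofReal_mul]; positivity
    simp only
    rw [hg _ h5]
    have := integral_comp_mul_left_Ioi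
      (fun u : ℝ => Complex.exp (-(((r⁻¹ : ℝ) : ℂ) * s) * u) * S u) 0 hr
    rw [mul_zero, Complex.real_smul] at this
    rw [← this]
    refine integral_congr_ae (Eventually.of_forall fun u => ?_)
    simp only
    congr 2
    have hrc : (r:ℂ) ≠ 0 := by exact_mod_cast hr.ne'
    push_cast
    field_simp
end

section
/- Let 0 < γ < 1. There exist a sequence of real-valued Schwartz functions φ_n : ℝ → ℝ (n ∈ ℕ), a constant C_γ > 0 depending only on γ, and constants C > 0 and A > 0 (A = 124 is admissible) such that for every n: (1) ∫_{-∞}^{∞} φ_n(y) dy = 1; (2) |φ_n(y)| ≤ C_γ exp(−|y|^γ) for all y ∈ ℝ; (3) y·φ_n(y) ≥ 0 for all y ∈ ℝ; (4) the Fourier transform φ̂_n is supported in [−1,1]; (5) sup_{t ∈ [−1,1]} |φ̂_n^{(j)}(t)| ≤ C A^j n^j for all j ≤ n. -/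
open MeasureTheory
open scoped FourierTransform ContDiff SchwartzMap

namespace Stmt2Aux

/-- Fourier transform in the normalisation `∫ e^{-itx} f(x) dx`. -/
noncomputable def ft (f : ℝ → ℂ) (t : ℝ) : ℂ :=
  ∫ x : ℝ, Complex.exp (-(↑(t * x)) * Complex.I) * f x

lemma ft_eq (f : ℝ → ℂ) (t : ℝ) : ft f t = 𝓕 f ((2 * Real.pi)⁻¹ * t) := by
  rw [Real.fourier_real_eq_integral_exp_smul, ft]
  congr 1
  ext x
  rw [smul_eq_mul]
  congr 2
  have : (-2 * Real.pi * x * ((2 * Real.pi)⁻¹ * t)) = -(t * x) := by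
    field_simp
  rw [this]
  push_cast
  ring

lemma norm_ker (t x : ℝ) : ‖Complex.exp (-(↑(t * x)) * Complex.I)‖ = 1 := by
  rw [← Complex.ofReal_neg, Complex.norm_exp_ofReal_mul_I]

lemma ft_mul (f g b : ℝ → ℂ) (μ : Measure ℝ) [SFinite μ] (l R r : ℝ)
    (hf : Integrable f) (hb : Integrable b μ)
    (hg : ∀ x, g x = ∫ s, b s * Complex.exp (↑(l * s * x) * Complex.I) ∂μ)
    (hR : ∀ t, R < |t| → ft f t = 0)
    (hr : ∀ s, r < |l * s| → b s = 0) (t : ℝ) (ht : R + r < |t|) :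
    ft (fun x => f x * g x) t = 0 := by
  have h1 : ft (fun x => f x * g x) t
      = ∫ x : ℝ, ∫ s, (Complex.exp (-(↑(t * x)) * Complex.I)
          * Complex.exp (↑(l * s * x) * Complex.I)) * (f x * b s) ∂μ := by
    rw [ft]
    congr 1
    ext x
    rw [hg x, ← integral_const_mul, ← integral_const_mul]
    congr 1
    ext s
    ring
  have hInt : Integrable (fun p : ℝ × ℝ => (Complex.exp (-(↑(t * p.1)) * Complex.I)
          * Complex.exp (↑(l * p.2 * p.1) * Complex.I)) * (f p.1 * b p.2))
          ((volume : Measure ℝ).prod μ) := by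
    apply Integrable.bdd_mul (c := 1) (hf.mul_prod hb)
    · apply Continuous.aestronglyMeasurable
      fun_prop
    · refine Filter.Eventually.of_forall fun p => ?_
      rw [norm_mul, norm_ker, Complex.norm_exp_ofReal_mul_I, one_mul]
  rw [h1, integral_integral_swap hInt]
  have h2 : ∀ s, ∫ x : ℝ, (Complex.exp (-(↑(t * x)) * Complex.I)
          * Complex.exp (↑(l * s * x) * Complex.I)) * (f x * b s) = 0 := by
    intro s
    by_cases hs : r < |l * s|
    · simp [hr s hs]
    · have h3 : ft f (t - l * s) = 0 := by
        apply hR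
        have := abs_sub_abs_le_abs_sub t (l * s)
        linarith
      have h4 : ∫ x : ℝ, (Complex.exp (-(↑(t * x)) * Complex.I)
          * Complex.exp (↑(l * s * x) * Complex.I)) * (f x * b s) = b s * ft f (t - l * s) := by
        rw [ft, ← integral_const_mul]
        congr 1
        ext x
        rw [← Complex.exp_add]
        have : -((t * x : ℝ) : ℂ) * Complex.I + ((l * s * x : ℝ) : ℂ) * Complex.I
          = -(((t - l * s) * x : ℝ) : ℂ) * Complex.I := by
          push_cast
          ring
        rw [this]
        ring
      rw [h4, h3, mul_zero]
  simp only [h2, integral_zero]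

lemma sinc_int (x : ℝ) : ((Real.sinc x : ℝ) : ℂ)
    = ∫ s in (-1 : ℝ)..1, (1 / 2 : ℂ) * Complex.exp (↑(x * s) * Complex.I) := by
  by_cases hx : x = 0
  · subst hx
    simp
    norm_num
  have h := integral_exp_mul_I_eq_sinc x
  have h2 := intervalIntegral.smul_integral_comp_mul_left
    (f := fun t : ℝ => Complex.exp (t * Complex.I)) (a := -1) (b := 1) x
  rw [intervalIntegral.integral_const_mul]
  have h3 : (x : ℂ) ≠ 0 := by exact_mod_cast hx
  simp only [mul_neg, mul_one] at h2
  rw [h, Complex.real_smul] at h2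
  apply mul_left_cancel₀ h3
  rw [mul_left_comm, h2]
  ring

lemma sinc_lip (x y : ℝ) : |Real.sinc x - Real.sinc y| ≤ |x - y| := by
  have h : ((Real.sinc x - Real.sinc y : ℝ) : ℂ) = ∫ s in (-1 : ℝ)..1,
      ((1 / 2 : ℂ) * Complex.exp (↑(x * s) * Complex.I)
        - (1 / 2 : ℂ) * Complex.exp (↑(y * s) * Complex.I)) := by
    rw [intervalIntegral.integral_sub, ← sinc_int, ← sinc_int]
    · push_cast
      rfl
    · apply Continuous.intervalIntegrable
      fun_prop
    · apply Continuous.intervalIntegrable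
      fun_prop
  rw [← Real.norm_eq_abs, ← Complex.norm_real, h]
  have := intervalIntegral.norm_integral_le_of_norm_le_const (a := -1) (b := 1)
    (C := |x - y| / 2) (f := fun s : ℝ => ((1 / 2 : ℂ) * Complex.exp (↑(x * s) * Complex.I)
        - (1 / 2 : ℂ) * Complex.exp (↑(y * s) * Complex.I))) ?_
  · refine this.trans (le_of_eq ?_)
    norm_num
  · intro s hs
    rw [Set.uIoc_of_le (by norm_num)] at hs
    have hs1 : |s| ≤ 1 := abs_le.2 ⟨hs.1.le, hs.2⟩
    have e : ((1 / 2 : ℂ) * Complex.exp (↑(x * s) * Complex.I)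
        - (1 / 2 : ℂ) * Complex.exp (↑(y * s) * Complex.I))
        = (1 / 2 : ℂ) * Complex.exp (↑(y * s) * Complex.I)
          * (Complex.exp (Complex.I * ↑((x - y) * s)) - 1) := by
      rw [mul_sub, mul_assoc, ← Complex.exp_add]
      push_cast
      ring_nf
    rw [e, norm_mul, norm_mul, Complex.norm_exp_ofReal_mul_I]
    have h5 := Real.norm_exp_I_mul_ofReal_sub_one_le (x := (x - y) * s)
    have h6 : ‖(x - y) * s‖ ≤ |x - y| := by
      rw [Real.norm_eq_abs, abs_mul]
      exact mul_le_of_le_one_right (abs_nonneg _) hs1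
    have h7 : ‖(1 / 2 : ℂ)‖ = 1 / 2 := by norm_num
    rw [h7]
    linarith

lemma abs_mul_sinc_le (x : ℝ) : |x| * |Real.sinc x| ≤ 1 := by
  by_cases hx : x = 0
  · simp [hx]
  rw [Real.sinc_of_ne_zero hx, abs_div, mul_div_cancel₀ _ (abs_ne_zero.2 hx)]
  exact Real.abs_sin_le_one x

lemma ft_mul_sinc (f : ℝ → ℂ) (a R : ℝ) (ha : 0 ≤ a) (hf : Integrable f)
    (hR : ∀ t, R < |t| → ft f t = 0) (t : ℝ) (ht : R + a < |t|) :
    ft (fun x => f x * (Real.sinc (a * x) : ℝ)) t = 0 := by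
  apply ft_mul f (fun x => ((Real.sinc (a * x) : ℝ) : ℂ))
    (fun s => (Set.Ioc (-1 : ℝ) 1).indicator (fun _ => (1 / 2 : ℂ)) s) volume a R a hf _ _ hR _ t ht
  · rw [integrable_indicator_iff measurableSet_Ioc]
    simp
  · intro x
    rw [sinc_int, intervalIntegral.integral_of_le (by norm_num),
      ← integral_indicator measurableSet_Ioc]
    congr 1
    ext s
    by_cases hs : s ∈ Set.Ioc (-1 : ℝ) 1
    · simp only [Set.indicator_of_mem hs]
      congr 4
      ring
    · simp only [Set.indicator_of_notMem hs, zero_mul]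
  · intro s hs
    apply Set.indicator_of_notMem
    intro h
    have hs1 : |s| ≤ 1 := abs_le.2 ⟨h.1.le, h.2⟩
    rw [abs_mul, abs_of_nonneg ha] at hs
    nlinarith

lemma base_exists : ∃ q : ℝ → ℝ, Continuous q ∧ (∀ x, 0 ≤ q x) ∧ (∀ x, q (-x) = q x) ∧
    0 < q 0 ∧ (∀ k : ℕ, Integrable (fun x => |x| ^ k * q x)) ∧
    (∃ B, ∀ x, (1 + |x|) * q x ≤ B) ∧
    (∀ t, 1 / 2 < |t| → ft (fun x => (q x : ℂ)) t = 0) := by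
  have hpi := Real.pi_pos
  let bb : ContDiffBump (0 : ℝ) := ⟨(16 * Real.pi)⁻¹, (8 * Real.pi)⁻¹, by positivity, by
    gcongr
    norm_num⟩
  have hc : HasCompactSupport (fun s => ((bb s : ℝ) : ℂ)) := by
    have := bb.hasCompactSupport.comp_left (g := fun r : ℝ => (r : ℂ)) (by simp)
    exact this
  have hd : ContDiff ℝ ∞ (fun s => ((bb s : ℝ) : ℂ)) :=
    Complex.ofRealCLM.contDiff.comp bb.contDiff
  let β : 𝓢(ℝ, ℂ) := hc.toSchwartzMap hd
  have hβ : ∀ s, β s = ((bb s : ℝ) : ℂ) := fun s => rfl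
  let f : 𝓢(ℝ, ℂ) := 𝓕 β
  have hfx : ∀ x, f x = ∫ s : ℝ, Complex.exp (↑(-2 * Real.pi * s * x) * Complex.I) • β s := by
    intro x
    rw [← Real.fourier_real_eq_integral_exp_smul]
    rfl
  have hconj : ∀ x, f (-x) = (starRingEnd ℂ) (f x) := by
    intro x
    rw [hfx, hfx, ← integral_conj]
    congr 1
    ext s
    rw [smul_eq_mul, smul_eq_mul, map_mul, hβ, Complex.conj_ofReal, ← Complex.exp_conj]
    congr 2
    rw [map_mul, Complex.conj_ofReal, Complex.conj_I]
    push_cast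
    ring
  have hff : ∀ x, 𝓕 (f : ℝ → ℂ) x = β (-x) := by
    intro x
    have h1 : 𝓕⁻ (f : 𝓢(ℝ, ℂ)) = β := FourierTransform.fourierInv_fourier_eq β
    have h2 : (𝓕⁻ (f : 𝓢(ℝ, ℂ)) : 𝓢(ℝ, ℂ)) (-x) = β (-x) := by rw [h1]
    rw [SchwartzMap.fourierInv_coe, Real.fourierInv_eq_fourier_neg, neg_neg] at h2
    exact h2
  have hzero : ∀ s, (8 * Real.pi)⁻¹ < |s| → β s = 0 := by
    intro s hs
    rw [hβ, bb.zero_of_le_dist]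
    · simp
    · rw [Real.dist_eq, sub_zero]
      exact hs.le
  have hftf : ∀ t, 1 / 4 < |t| → ft f t = 0 := by
    intro t ht
    rw [ft_eq, hff]
    apply hzero
    rw [abs_neg, abs_mul, abs_of_pos (by positivity)]
    calc (8 * Real.pi)⁻¹ = (2 * Real.pi)⁻¹ * (1 / 4) := by
          field_simp
          norm_num
      _ < _ := by gcongr
  have hq : ∀ x, ((‖f x‖ ^ 2 : ℝ) : ℂ) = f x * f (-x) := by
    intro x
    rw [hconj, Complex.mul_conj, Complex.normSq_eq_norm_sq]
  obtain ⟨M, hMpos, hM⟩ := f.decay 0 0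
  obtain ⟨M1, hM1pos, hM1⟩ := f.decay 1 0
  simp only [pow_zero, one_mul, norm_iteratedFDeriv_zero, pow_one, Real.norm_eq_abs] at hM hM1
  refine ⟨fun x => ‖f x‖ ^ 2, ?_, ?_, ?_, ?_, ?_, ?_, ?_⟩
  · exact f.continuous.norm.pow 2
  · intro x
    positivity
  · intro x
    simp only [hconj, RCLike.norm_conj]
  · have h0 : f 0 = ((∫ s, bb s : ℝ) : ℂ) := by
      rw [hfx, ← integral_complex_ofReal]
      simp [hβ]
    have h1 : (0 : ℝ) < ∫ s, bb s := bb.integral_pos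
    simp only [h0, Complex.norm_real]
    have : (∫ s, bb s) ≠ 0 := h1.ne'
    positivity
  · intro k
    have h1 := f.integrable_pow_mul volume k
    have h2 : (fun x => |x| ^ k * ‖f x‖ ^ 2) = fun x => ‖f x‖ * (‖x‖ ^ k * ‖f x‖) := by
      ext x
      rw [Real.norm_eq_abs]
      ring
    rw [h2]
    apply Integrable.bdd_mul (c := M) h1 f.continuous.norm.aestronglyMeasurable
    refine Filter.Eventually.of_forall fun x => ?_
    simpa using hM x
  · refine ⟨(M + M1) * M, fun x => ?_⟩
    have h1 := hM x
    have h2 := hM1 x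
    have h3 := norm_nonneg (f x)
    nlinarith
  · intro t ht
    simp only [hq]
    apply ft_mul f (fun x => f (-x)) β volume (2 * Real.pi) (1 / 4) (1 / 4) f.integrable
      β.integrable _ hftf _ t (by linarith)
    · intro x
      rw [hfx]
      congr 1
      ext s
      rw [smul_eq_mul, mul_comm]
      congr 4
      ring
    · intro s hs
      apply hzero
      rw [abs_mul, abs_of_pos (by positivity)] at hs
      rw [inv_lt_iff_one_lt_mul₀ (by positivity)]
      linarith

/-- Finite products of squared `sinc` factors. -/
noncomputable def HP (w : ℕ → ℝ) (m : ℕ) (x : ℝ) : ℝ :=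
  ∏ i ∈ Finset.range m, Real.sinc (w i * x) ^ 2

/-- Infinite product of squared `sinc` factors. -/
noncomputable def HI (w : ℕ → ℝ) (x : ℝ) : ℝ := ⨅ m, HP w m x

lemma sinc_sq_le (x : ℝ) : Real.sinc x ^ 2 ≤ 1 := by
  rw [sq_le_one_iff_abs_le_one]
  exact Real.abs_sinc_le_one x

lemma HP_nonneg (w : ℕ → ℝ) (m : ℕ) (x : ℝ) : 0 ≤ HP w m x :=
  Finset.prod_nonneg fun _ _ => sq_nonneg _

lemma HP_le_one (w : ℕ → ℝ) (m : ℕ) (x : ℝ) : HP w m x ≤ 1 :=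
  Finset.prod_le_one (fun _ _ => sq_nonneg _) fun _ _ => sinc_sq_le _

lemma HP_succ (w : ℕ → ℝ) (m : ℕ) (x : ℝ) :
    HP w (m + 1) x = HP w m x * Real.sinc (w m * x) ^ 2 := by
  rw [HP, Finset.prod_range_succ, HP]

lemma HP_anti (w : ℕ → ℝ) (x : ℝ) : Antitone fun m => HP w m x := by
  apply antitone_nat_of_succ_le
  intro m
  rw [HP_succ]
  exact mul_le_of_le_one_right (HP_nonneg _ _ _) (sinc_sq_le _)

lemma HP_bdd (w : ℕ → ℝ) (x : ℝ) : BddBelow (Set.range fun m => HP w m x) :=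
  ⟨0, by
    rintro _ ⟨m, rfl⟩
    exact HP_nonneg _ _ _⟩

lemma HP_tendsto (w : ℕ → ℝ) (x : ℝ) :
    Filter.Tendsto (fun m => HP w m x) Filter.atTop (nhds (HI w x)) :=
  tendsto_atTop_ciInf (HP_anti w x) (HP_bdd w x)

lemma HI_le (w : ℕ → ℝ) (m : ℕ) (x : ℝ) : HI w x ≤ HP w m x := ciInf_le (HP_bdd w x) m

lemma HI_nonneg (w : ℕ → ℝ) (x : ℝ) : 0 ≤ HI w x := le_ciInf fun _ => HP_nonneg _ _ _

lemma HI_le_one (w : ℕ → ℝ) (x : ℝ) : HI w x ≤ 1 := (HI_le w 0 x).trans (HP_le_one _ _ _)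

lemma HI_even (w : ℕ → ℝ) (x : ℝ) : HI w (-x) = HI w x := by
  simp [HI, HP, Real.sinc_neg]

lemma HI_zero (w : ℕ → ℝ) : HI w 0 = 1 := by
  simp [HI, HP]

lemma HP_cont (w : ℕ → ℝ) (m : ℕ) : Continuous (HP w m) := by
  unfold HP
  apply continuous_finsetProd
  intro i _
  exact (Real.continuous_sinc.comp (by fun_prop)).pow 2

lemma HP_lip (w : ℕ → ℝ) (hw : ∀ i, 0 ≤ w i) (m : ℕ) (x y : ℝ) :
    |HP w m x - HP w m y| ≤ 2 * (∑ i ∈ Finset.range m, w i) * |x - y| := by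
  induction m with
  | zero => simp [HP]
  | succ m ih =>
    rw [HP_succ, HP_succ, Finset.sum_range_succ]
    have e : HP w m x * Real.sinc (w m * x) ^ 2 - HP w m y * Real.sinc (w m * y) ^ 2
      = (HP w m x - HP w m y) * Real.sinc (w m * x) ^ 2
        + HP w m y * (Real.sinc (w m * x) ^ 2 - Real.sinc (w m * y) ^ 2) := by ring
    rw [e]
    have h1 : |(HP w m x - HP w m y) * Real.sinc (w m * x) ^ 2| ≤ |HP w m x - HP w m y| := by
      rw [abs_mul, abs_of_nonneg (sq_nonneg (Real.sinc (w m * x)))]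
      exact mul_le_of_le_one_right (abs_nonneg _) (sinc_sq_le _)
    have h2 : |Real.sinc (w m * x) ^ 2 - Real.sinc (w m * y) ^ 2| ≤ 2 * w m * |x - y| := by
      have e2 : Real.sinc (w m * x) ^ 2 - Real.sinc (w m * y) ^ 2
        = (Real.sinc (w m * x) + Real.sinc (w m * y))
          * (Real.sinc (w m * x) - Real.sinc (w m * y)) := by ring
      rw [e2, abs_mul]
      have h3 := sinc_lip (w m * x) (w m * y)
      rw [← mul_sub, abs_mul, abs_of_nonneg (hw m)] at h3
      have h4 : |Real.sinc (w m * x) + Real.sinc (w m * y)| ≤ 2 := by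
        have := abs_add_le (Real.sinc (w m * x)) (Real.sinc (w m * y))
        have := Real.abs_sinc_le_one (w m * x)
        have := Real.abs_sinc_le_one (w m * y)
        linarith
      calc _ ≤ 2 * (w m * |x - y|) := mul_le_mul h4 h3 (abs_nonneg _) (by norm_num)
        _ = _ := by ring
    have h5 : |HP w m y * (Real.sinc (w m * x) ^ 2 - Real.sinc (w m * y) ^ 2)|
        ≤ |Real.sinc (w m * x) ^ 2 - Real.sinc (w m * y) ^ 2| := by
      rw [abs_mul, abs_of_nonneg (HP_nonneg w m y)]
      exact mul_le_of_le_one_left (abs_nonneg _) (HP_le_one _ _ _)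
    refine (abs_add_le _ _).trans ?_
    linarith

lemma HI_lip (w : ℕ → ℝ) (hw : ∀ i, 0 ≤ w i)
    (hs : ∀ m, ∑ i ∈ Finset.range m, w i ≤ 1 / 4) (x y : ℝ) :
    |HI w x - HI w y| ≤ 1 / 2 * |x - y| := by
  apply le_of_tendsto ((HP_tendsto w x).sub (HP_tendsto w y)).abs
  refine Filter.Eventually.of_forall fun m => (HP_lip w hw m x y).trans ?_
  have := hs m
  gcongr
  linarith

lemma HI_cont (w : ℕ → ℝ) (hw : ∀ i, 0 ≤ w i)
    (hs : ∀ m, ∑ i ∈ Finset.range m, w i ≤ 1 / 4) : Continuous (HI w) := by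
  have : LipschitzWith (1 / 2) (HI w) := by
    apply LipschitzWith.of_dist_le_mul
    intro x y
    rw [Real.dist_eq, Real.dist_eq]
    simpa using HI_lip w hw hs x y
  exact this.continuous

lemma HI_ge (w : ℕ → ℝ) (hw : ∀ i, 0 ≤ w i)
    (hs : ∀ m, ∑ i ∈ Finset.range m, w i ≤ 1 / 4) (x : ℝ) (hx : |x| ≤ 1) : 1 / 2 ≤ HI w x := by
  have h := HI_lip w hw hs x 0
  rw [HI_zero, sub_zero] at h
  have := (abs_le.1 h).1
  linarith

lemma ft_HP (q : ℝ → ℝ) (w : ℕ → ℝ) (hw : ∀ i, 0 ≤ w i) (hqi : Integrable q)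
    (hq : ∀ t, 1 / 2 < |t| → ft (fun x => (q x : ℂ)) t = 0) (m : ℕ) :
    Integrable (fun x => ((q x * HP w m x : ℝ) : ℂ)) ∧
    ∀ t, 1 / 2 + 2 * ∑ i ∈ Finset.range m, w i < |t| →
      ft (fun x => ((q x * HP w m x : ℝ) : ℂ)) t = 0 := by
  have hInt : ∀ m, Integrable (fun x => ((q x * HP w m x : ℝ) : ℂ)) := by
    intro m
    apply Integrable.ofReal
    apply Integrable.mul_bdd (c := 1) hqi (HP_cont w m).aestronglyMeasurable
    refine Filter.Eventually.of_forall fun x => ?_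
    rw [Real.norm_eq_abs, abs_of_nonneg (HP_nonneg _ _ _)]
    exact HP_le_one _ _ _
  refine ⟨hInt m, ?_⟩
  induction m with
  | zero =>
    intro t ht
    simpa [HP] using hq t (by simpa using ht)
  | succ m ih =>
    intro t ht
    rw [Finset.sum_range_succ] at ht
    have h1 := fun t ht => ft_mul_sinc _ (w m) _ (hw m) (hInt m) ih t ht
    have hInt2 : Integrable (fun x => ((q x * HP w m x : ℝ) : ℂ)
        * ((Real.sinc (w m * x) : ℝ) : ℂ)) := by
      apply Integrable.mul_bdd (c := 1) (hInt m)
      · apply Continuous.aestronglyMeasurable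
        exact Complex.continuous_ofReal.comp (Real.continuous_sinc.comp (by fun_prop))
      · refine Filter.Eventually.of_forall fun x => ?_
        rw [Complex.norm_real]
        exact Real.abs_sinc_le_one _
    have h2 := ft_mul_sinc _ (w m) _ (hw m) hInt2 h1 t (by linarith)
    rw [← h2]
    congr 1
    ext x
    rw [HP_succ]
    push_cast
    ring

lemma ft_HI (q : ℝ → ℝ) (w : ℕ → ℝ) (hw : ∀ i, 0 ≤ w i)
    (hs : ∀ m, ∑ i ∈ Finset.range m, w i ≤ 1 / 4) (hqi : Integrable q)
    (hq : ∀ t, 1 / 2 < |t| → ft (fun x => (q x : ℂ)) t = 0) (t : ℝ) (ht : 1 < |t|) :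
      ft (fun x => ((q x * HI w x : ℝ) : ℂ)) t = 0 := by
  have h0 : ∀ m, ft (fun x => ((q x * HP w m x : ℝ) : ℂ)) t = 0 := by
    intro m
    apply (ft_HP q w hw hqi hq m).2
    linarith [hs m]
  have h1 : Filter.Tendsto (fun m => ft (fun x => ((q x * HP w m x : ℝ) : ℂ)) t) Filter.atTop
      (nhds (ft (fun x => ((q x * HI w x : ℝ) : ℂ)) t)) := by
    unfold ft
    apply tendsto_integral_of_dominated_convergence (fun x => ‖q x‖)
    · intro m
      apply AEStronglyMeasurable.mul
      · apply Continuous.aestronglyMeasurable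
        fun_prop
      · exact (ft_HP q w hw hqi hq m).1.aestronglyMeasurable
    · exact hqi.norm
    · intro m
      refine Filter.Eventually.of_forall fun x => ?_
      rw [norm_mul, norm_ker, one_mul, Complex.norm_real, norm_mul]
      apply mul_le_of_le_one_right (norm_nonneg _)
      rw [Real.norm_eq_abs, abs_of_nonneg (HP_nonneg _ _ _)]
      exact HP_le_one _ _ _
    · refine Filter.Eventually.of_forall fun x => ?_
      apply Filter.Tendsto.const_mul
      exact (Complex.continuous_ofReal.tendsto _).comp ((HP_tendsto w x).const_mul _)
  simp only [h0] at h1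
  exact (tendsto_nhds_unique h1 tendsto_const_nhds)

lemma integrable_pow_mul_shift (Q : ℝ → ℝ) (hc : Continuous Q) (h0 : ∀ x, 0 ≤ Q x)
    (hm : ∀ k : ℕ, Integrable (fun x => (1 + |x|) ^ k * Q x)) (k : ℕ) :
    Integrable (fun y : ℝ => y ^ k * Q (y - 1)) ∧
    ∫ y : ℝ, |y| ^ k * Q (y - 1) ≤ ∫ u, (1 + |u|) ^ k * Q u := by
  have hb : ∀ u : ℝ, |u + 1| ^ k * Q u ≤ (1 + |u|) ^ k * Q u := by
    intro u
    apply mul_le_mul_of_nonneg_right _ (h0 u)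
    gcongr
    have := abs_add_le u 1
    rw [abs_one] at this
    linarith
  have h1 : Integrable (fun u : ℝ => (u + 1) ^ k * Q u) := by
    refine (hm k).mono' ?_ ?_
    · apply Continuous.aestronglyMeasurable
      fun_prop
    · refine Filter.Eventually.of_forall fun u => ?_
      rw [norm_mul, norm_pow, Real.norm_eq_abs, Real.norm_eq_abs, abs_of_nonneg (h0 u)]
      exact hb u
  constructor
  · have := h1.comp_sub_right 1
    simpa using this
  · have e : ∫ y : ℝ, |y| ^ k * Q (y - 1) = ∫ u : ℝ, |u + 1| ^ k * Q u := by
      rw [← integral_sub_right_eq_self (fun u : ℝ => |u + 1| ^ k * Q u) 1]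
      simp
    rw [e]
    refine integral_mono ?_ (hm k) hb
    convert h1.norm using 2 with u
    rw [norm_mul, norm_pow, Real.norm_eq_abs, Real.norm_eq_abs, abs_of_nonneg (h0 u)]

lemma ft_shift_zero (Q : ℝ → ℝ) (hc : Continuous Q) (h0 : ∀ x, 0 ≤ Q x)
    (hm : ∀ k : ℕ, Integrable (fun x => (1 + |x|) ^ k * Q x))
    (hft : ∀ t, 1 < |t| → ft (fun x => (Q x : ℂ)) t = 0) (t : ℝ) (ht : 1 < |t|) :
    ft (fun y => ((y * Q (y - 1) : ℝ) : ℂ)) t = 0 := by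
  have hpi := Real.pi_pos
  set g : ℝ → ℂ := fun y => ((Q (y - 1) : ℝ) : ℂ) with hg
  have hg1 : Integrable g := by
    have := (integrable_pow_mul_shift Q hc h0 hm 0).1
    simp only [pow_zero, one_mul] at this
    exact this.ofReal
  have hg2 : Integrable (fun y : ℝ => y • g y) := by
    have := (integrable_pow_mul_shift Q hc h0 hm 1).1.ofReal (𝕜 := ℂ)
    simpa [hg] using this
  have hz : ∀ s, 1 < |s| → ft g s = 0 := by
    intro s hs
    have e : ft g s = Complex.exp (-(↑s) * Complex.I) * ft (fun x => (Q x : ℂ)) s := by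
      rw [ft, ft, ← integral_const_mul, ← integral_sub_right_eq_self
        (fun x : ℝ => Complex.exp (-(↑s) * Complex.I)
          * (Complex.exp (-(↑(s * x)) * Complex.I) * (Q x : ℂ))) 1]
      congr 1
      ext y
      rw [← mul_assoc, ← Complex.exp_add, hg]
      congr 2
      push_cast
      ring
    rw [e, hft s hs, mul_zero]
  have hF : ∀ ξ, 1 < |2 * Real.pi * ξ| → 𝓕 g ξ = 0 := by
    intro ξ hξ
    have := hz _ hξ
    rw [ft_eq] at this
    rw [← this]
    congr 1
    field_simp
  have hd := Real.deriv_fourier hg1 hg2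
  set ξ := (2 * Real.pi)⁻¹ * t with hξ
  have hopen : IsOpen {ξ : ℝ | 1 < |2 * Real.pi * ξ|} :=
    isOpen_lt continuous_const (by fun_prop)
  have hmem : ξ ∈ {ξ : ℝ | 1 < |2 * Real.pi * ξ|} := by
    have : 2 * Real.pi * ξ = t := by
      rw [hξ]
      field_simp
    rw [Set.mem_ofPred_eq, this]
    exact ht
  have hev : 𝓕 g =ᶠ[nhds ξ] fun _ => 0 := by
    filter_upwards [hopen.mem_nhds hmem] with z hz'
    exact hF z hz'
  have h1 : deriv (𝓕 g) ξ = 0 := by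
    rw [hev.deriv_eq]
    simp
  rw [hd] at h1
  have e2 : (fun x : ℝ => (-2 * (Real.pi : ℂ) * Complex.I * x) • g x)
      = fun x => (-2 * (Real.pi : ℂ) * Complex.I) * ((x * Q (x - 1) : ℝ) : ℂ) := by
    ext x
    simp only [hg, smul_eq_mul]
    push_cast
    ring
  rw [e2] at h1
  have e3 : ft (fun x => (-2 * (Real.pi : ℂ) * Complex.I) * ((x * Q (x - 1) : ℝ) : ℂ)) t = 0 := by
    rw [ft_eq]
    exact h1
  have e4 : ft (fun x => (-2 * (Real.pi : ℂ) * Complex.I) * ((x * Q (x - 1) : ℝ) : ℂ)) t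
      = (-2 * (Real.pi : ℂ) * Complex.I) * ft (fun y => ((y * Q (y - 1) : ℝ) : ℂ)) t := by
    rw [ft, ft, ← integral_const_mul]
    congr 1
    ext x
    ring
  rw [e4] at e3
  have hne : (-2 * (Real.pi : ℂ) * Complex.I) ≠ 0 := by
    have : (Real.pi : ℂ) ≠ 0 := by exact_mod_cast hpi.ne'
    simp [this]
  exact (mul_eq_zero.1 e3).resolve_left hne

lemma phi_exists (Q : ℝ → ℝ) (hc : Continuous Q) (h0 : ∀ x, 0 ≤ Q x)
    (heven : ∀ x, Q (-x) = Q x)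
    (hm : ∀ k : ℕ, Integrable (fun x => (1 + |x|) ^ k * Q x))
    (hft : ∀ t, 1 < |t| → ft (fun x => (Q x : ℂ)) t = 0) (κ : ℝ) (hκ : ∫ x, Q x = κ)
    (hκp : 0 < κ) :
    ∃ φ : 𝓢(ℝ, ℝ), (∀ y, φ y = κ⁻¹ * (y * Q (y - 1))) ∧ (∫ y, φ y) = 1 ∧
      (∀ t, 1 < |t| → ft (fun y => (φ y : ℂ)) t = 0) ∧
      ∀ (j : ℕ) (t : ℝ), ‖iteratedDeriv j (ft (fun y => (φ y : ℂ))) t‖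
        ≤ κ⁻¹ * ∫ u, (1 + |u|) ^ (j + 1) * Q u := by
  have hpi := Real.pi_pos
  set p : ℝ → ℝ := fun y => κ⁻¹ * (y * Q (y - 1)) with hp
  set P : ℝ → ℂ := fun y => (p y : ℂ) with hP
  have hpc : Continuous p := by fun_prop
  have hPc : Continuous P := Complex.continuous_ofReal.comp hpc
  have hpm : ∀ k : ℕ, Integrable (fun y : ℝ => y ^ k * p y) := by
    intro k
    have e : (fun y : ℝ => y ^ k * p y) = fun y => κ⁻¹ * (y ^ (k + 1) * Q (y - 1)) := by
      ext y
      rw [hp]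
      ring
    rw [e]
    exact (integrable_pow_mul_shift Q hc h0 hm (k + 1)).1.const_mul κ⁻¹
  have hPm : ∀ k : ℕ, Integrable (fun y : ℝ => y ^ k • P y) := by
    intro k
    convert (hpm k).ofReal (𝕜 := ℂ) using 2 with y
    simp [hP]
  have hPi : Integrable P := by simpa using hPm 0
  have hPn : ∀ k : ℕ, Integrable (fun y : ℝ => ‖y‖ ^ k * ‖P y‖) := by
    intro k
    convert (hPm k).norm using 2 with y
    rw [norm_smul, norm_pow]
  have hPft : ∀ t, 1 < |t| → ft P t = 0 := by
    intro t ht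
    have h := ft_shift_zero Q hc h0 hm hft t ht
    have e4 : ft P t = (κ : ℂ)⁻¹ * ft (fun y => ((y * Q (y - 1) : ℝ) : ℂ)) t := by
      rw [ft, ft, ← integral_const_mul]
      congr 1
      ext x
      rw [hP, hp]
      push_cast
      ring
    rw [e4, h, mul_zero]
  have hsm : ContDiff ℝ ∞ (𝓕 P) := Real.contDiff_fourier (N := ⊤) fun n _ => hPn n
  have hcs : HasCompactSupport (𝓕 P) := by
    apply HasCompactSupport.intro (K := Metric.closedBall 0 1) (isCompact_closedBall 0 1)
    intro ξ hξ
    have h1 : 1 < |ξ| := by simpa using hξ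
    have h2 : ft P (2 * Real.pi * ξ) = 0 := by
      apply hPft
      rw [abs_mul, abs_of_pos (by positivity)]
      have := Real.two_le_pi
      nlinarith
    rw [ft_eq] at h2
    rw [← h2]
    congr 1
    field_simp
  let ψ : 𝓢(ℝ, ℂ) := hcs.toSchwartzMap hsm
  have hinv : 𝓕⁻ (𝓕 P) = P := hPc.fourierInv_fourier_eq hPi ψ.integrable
  let φ : 𝓢(ℝ, ℝ) := (𝓕⁻ ψ).postcompCLM Complex.reCLM
  have hφ : ∀ y, φ y = p y := by
    intro y
    have h1 : (𝓕⁻ ψ : 𝓢(ℝ, ℂ)) y = P y := by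
      rw [SchwartzMap.fourierInv_coe]
      exact congrFun hinv y
    rw [SchwartzMap.postcompCLM_apply, h1]
    simp [hP]
  have hφP : (fun y => ((φ y : ℝ) : ℂ)) = P := by
    ext y
    rw [hφ]
  refine ⟨φ, hφ, ?_, ?_, ?_⟩
  · simp only [hφ, hp]
    rw [integral_const_mul]
    have e : ∫ y : ℝ, y * Q (y - 1) = ∫ u : ℝ, (u + 1) * Q u := by
      rw [← integral_sub_right_eq_self (fun u : ℝ => (u + 1) * Q u) 1]
      simp
    have hQi : Integrable Q := by simpa using hm 0
    have hQ1 : Integrable (fun u : ℝ => u * Q u) := by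
      refine (hm 1).mono' (by fun_prop) ?_
      refine Filter.Eventually.of_forall fun u => ?_
      rw [norm_mul, Real.norm_eq_abs, Real.norm_eq_abs, abs_of_nonneg (h0 u)]
      apply mul_le_mul_of_nonneg_right _ (h0 u)
      simp
    have hodd : ∫ u : ℝ, u * Q u = 0 := by
      have h1 := integral_neg_eq_self (fun u : ℝ => u * Q u) volume
      simp only [heven, neg_mul, integral_neg] at h1
      linarith
    have e2 : ∫ u : ℝ, (u + 1) * Q u = κ := by
      simp only [add_mul, one_mul]
      rw [integral_add hQ1 hQi, hodd, hκ, zero_add]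
    rw [e, e2, inv_mul_cancel₀ hκp.ne']
  · intro t ht
    rw [hφP]
    exact hPft t ht
  · intro j t
    rw [hφP]
    have e : ft P = fun t => 𝓕 P ((2 * Real.pi)⁻¹ * t) := funext fun t => ft_eq P t
    rw [e, iteratedDeriv_comp_const_smul (hsm.of_le (mod_cast le_top)),
      Real.iteratedDeriv_fourier (N := ⊤) (fun n _ => hPm n) le_top, norm_smul]
    have h1 : ‖𝓕 (fun x : ℝ ↦ (-2 * Real.pi * Complex.I * x) ^ j • P x) ((2 * Real.pi)⁻¹ * t)‖
        ≤ ∫ x : ℝ, ‖(-2 * Real.pi * Complex.I * x) ^ j • P x‖ :=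
      VectorFourier.norm_fourierIntegral_le_integral_norm _ _ _ _ _
    have h2 : ∀ x : ℝ, ‖(-2 * Real.pi * Complex.I * (x : ℂ)) ^ j • P x‖
        = (2 * Real.pi) ^ j * κ⁻¹ * (|x| ^ (j + 1) * Q (x - 1)) := by
      intro x
      rw [norm_smul, norm_pow, norm_mul, norm_mul, norm_mul, Complex.norm_real, Complex.norm_real,
        Complex.norm_I, hP, Complex.norm_real, hp, norm_mul, norm_mul]
      simp only [Real.norm_eq_abs, norm_neg, Complex.norm_ofNat]
      rw [abs_of_pos hpi, abs_of_nonneg (h0 (x - 1)), abs_of_pos (inv_pos.2 hκp)]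
      ring
    simp only [h2] at h1
    rw [integral_const_mul] at h1
    have h3 := (integrable_pow_mul_shift Q hc h0 hm (j + 1)).2
    have h4 : ‖((2 * Real.pi)⁻¹) ^ j‖ = ((2 * Real.pi) ^ j)⁻¹ := by
      rw [Real.norm_eq_abs, abs_of_pos (by positivity), inv_pow]
    rw [h4]
    calc _ ≤ ((2 * Real.pi) ^ j)⁻¹ * ((2 * Real.pi) ^ j * κ⁻¹
            * ∫ x : ℝ, |x| ^ (j + 1) * Q (x - 1)) := by gcongr
      _ = κ⁻¹ * ∫ x : ℝ, |x| ^ (j + 1) * Q (x - 1) := by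
        field_simp
      _ ≤ _ := by gcongr

lemma rpow_absorb (γ δ d : ℝ) (hγ : 0 < γ) (hδ : γ < δ) (hd : 0 < d) :
    ∃ M : ℝ, ∀ v : ℝ, 0 ≤ v → v ^ γ ≤ M + d * v ^ δ := by
  set X : ℝ := (d⁻¹) ^ (δ - γ)⁻¹ with hX
  have hXpos : 0 < X := by positivity
  refine ⟨X ^ γ, fun v hv => ?_⟩
  rcases le_total v X with h | h
  · have h1 : v ^ γ ≤ X ^ γ := Real.rpow_le_rpow hv h hγ.le
    have h2 : 0 ≤ d * v ^ δ := by positivity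
    linarith
  · have hvp : 0 < v := hXpos.trans_le h
    have h1 : X ^ (δ - γ) = d⁻¹ := by
      rw [hX, ← Real.rpow_mul (by positivity), inv_mul_cancel₀ (by linarith), Real.rpow_one]
    have h2 : X ^ (δ - γ) ≤ v ^ (δ - γ) := Real.rpow_le_rpow hXpos.le h (by linarith)
    have h3 : v ^ δ = v ^ (δ - γ) * v ^ γ := by
      rw [← Real.rpow_add hvp]
      congr 1
      ring
    have h4 : 1 ≤ d * v ^ (δ - γ) := by
      rw [h1] at h2
      calc (1 : ℝ) = d * d⁻¹ := by field_simp
        _ ≤ _ := by gcongr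
    have h5 : v ^ γ ≤ d * v ^ δ := by
      rw [h3, ← mul_assoc]
      exact le_mul_of_one_le_left (by positivity) h4
    have h6 : 0 ≤ X ^ γ := by positivity
    linarith

lemma weights_exist (γ : ℝ) (hγ0 : 0 < γ) (hγ1 : γ < 1) :
    ∃ a : ℕ → ℝ, (∀ k, 0 ≤ a k) ∧ (∀ m, ∑ i ∈ Finset.range m, a i ≤ 1 / 8) ∧
    ∃ D : ℝ, 0 < D ∧ ∀ u : ℝ, ∃ K, HP a K u ≤ D * Real.exp (-((1 + |u|) ^ γ)) := by
  set δ : ℝ := (1 + γ) / 2 with hδ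
  have hδ0 : 0 < δ := by rw [hδ]; linarith
  have hδ1 : δ < 1 := by rw [hδ]; linarith
  have hγδ : γ < δ := by rw [hδ]; linarith
  have hp : 1 < δ⁻¹ := (one_lt_inv₀ hδ0).2 hδ1
  have hsum : Summable (fun k : ℕ => (((k : ℝ) + 1) ^ δ⁻¹)⁻¹) := by
    have := (summable_nat_add_iff 1).2 (Real.summable_nat_rpow_inv.2 hp)
    simpa using this
  set S : ℝ := ∑' k : ℕ, (((k : ℝ) + 1) ^ δ⁻¹)⁻¹ with hS
  have hS0 : 0 ≤ S := tsum_nonneg fun k => by positivity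
  set c : ℝ := 1 / (8 * (S + 1)) with hc
  have hcpos : 0 < c := by positivity
  set d : ℝ := (c / Real.exp 1) ^ δ with hd
  have hdpos : 0 < d := by positivity
  obtain ⟨M, hM⟩ := rpow_absorb γ δ d hγ0 hγδ hdpos
  refine ⟨fun k => c * (((k : ℝ) + 1) ^ δ⁻¹)⁻¹, fun k => by positivity, ?_, ?_⟩
  · intro m
    rw [← Finset.mul_sum]
    have h1 : ∑ i ∈ Finset.range m, (((i : ℝ) + 1) ^ δ⁻¹)⁻¹ ≤ S :=
      hsum.sum_le_tsum _ fun i _ => by positivity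
    calc _ ≤ c * (S + 1) := by
          gcongr
          linarith
      _ = 1 / 8 := by
        rw [hc]
        field_simp
  · refine ⟨Real.exp (2 + M), Real.exp_pos _, fun u => ?_⟩
    set Z : ℝ := c / Real.exp 1 * |u| with hZ
    have hZ0 : 0 ≤ Z := by positivity
    refine ⟨⌊Z ^ δ⌋₊, ?_⟩
    have h1 : HP (fun k => c * (((k : ℝ) + 1) ^ δ⁻¹)⁻¹) ⌊Z ^ δ⌋₊ u
        ≤ Real.exp (-1) ^ ⌊Z ^ δ⌋₊ := by
      rw [HP]
      conv_rhs => rw [← Finset.card_range ⌊Z ^ δ⌋₊, ← Finset.prod_const]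
      apply Finset.prod_le_prod (fun _ _ => sq_nonneg _)
      intro k hk
      rw [Finset.mem_range] at hk
      have h2 : (k : ℝ) + 1 ≤ Z ^ δ := by
        have : k + 1 ≤ ⌊Z ^ δ⌋₊ := hk
        have := (Nat.le_floor_iff (by positivity)).1 this
        exact_mod_cast this
      have h3 : ((k : ℝ) + 1) ^ δ⁻¹ ≤ Z := by
        calc ((k : ℝ) + 1) ^ δ⁻¹ ≤ (Z ^ δ) ^ δ⁻¹ :=
              Real.rpow_le_rpow (by positivity) h2 (by positivity)
          _ = Z := by
            rw [← Real.rpow_mul hZ0, mul_inv_cancel₀ hδ0.ne', Real.rpow_one]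
      set E : ℝ := ((k : ℝ) + 1) ^ δ⁻¹ with hE
      have hEpos : 0 < E := by positivity
      have h4 : Real.exp 1 ≤ |c * E⁻¹ * u| := by
        rw [abs_mul, abs_of_pos (by positivity)]
        have : c * E⁻¹ * |u| = Real.exp 1 * (Z / E) := by
          rw [hZ]
          field_simp
        rw [this]
        apply le_mul_of_one_le_right (Real.exp_pos _).le
        rwa [one_le_div hEpos]
      have h5 := abs_mul_sinc_le (c * E⁻¹ * u)
      have h6 : Real.exp 1 * |Real.sinc (c * E⁻¹ * u)| ≤ 1 :=
        (mul_le_mul_of_nonneg_right h4 (abs_nonneg _)).trans h5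
      have h7 : |Real.sinc (c * E⁻¹ * u)| ≤ Real.exp (-1) := by
        rw [Real.exp_neg, ← one_div (Real.exp 1), le_div_iff₀ (Real.exp_pos _)]
        linarith
      have h8 := Real.abs_sinc_le_one (c * E⁻¹ * u)
      rw [← sq_abs]
      nlinarith [abs_nonneg (Real.sinc (c * E⁻¹ * u))]
    refine h1.trans ?_
    rw [← Real.exp_nat_mul, ← Real.exp_add, Real.exp_le_exp]
    have h2 := Nat.lt_floor_add_one (Z ^ δ)
    have h3 : Z ^ δ = d * |u| ^ δ := by
      rw [hZ, Real.mul_rpow (by positivity) (abs_nonneg _)]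
    have h4 := hM |u| (abs_nonneg _)
    have h5 : (1 + |u|) ^ γ ≤ 1 + |u| ^ γ := by
      have := Real.rpow_add_le_add_rpow (zero_le_one) (abs_nonneg u) hγ0.le hγ1.le
      rwa [Real.one_rpow] at this
    rw [h3] at h2
    rw [h3]
    linarith

/-- The weights: `N` copies of `1/(8N)` followed by the sequence `a`. -/
noncomputable def wt (a : ℕ → ℝ) (N : ℕ) (i : ℕ) : ℝ :=
  if i < N then 1 / (8 * (N : ℝ)) else a (i - N)

lemma wt_nonneg (a : ℕ → ℝ) (ha : ∀ k, 0 ≤ a k) (N i : ℕ) : 0 ≤ wt a N i := by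
  unfold wt
  split_ifs
  · positivity
  · exact ha _

lemma wt_sum (a : ℕ → ℝ) (ha : ∀ k, 0 ≤ a k)
    (hs : ∀ m, ∑ i ∈ Finset.range m, a i ≤ 1 / 8) (N : ℕ) (hN : 0 < N) (m : ℕ) :
    ∑ i ∈ Finset.range m, wt a N i ≤ 1 / 4 := by
  have h1 : ∑ i ∈ Finset.range m, wt a N i ≤ ∑ i ∈ Finset.range (N + m), wt a N i := by
    apply Finset.sum_le_sum_of_subset_of_nonneg
    · intro i hi
      rw [Finset.mem_range] at *
      omega
    · intro i _ _
      exact wt_nonneg a ha N i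
  refine h1.trans ?_
  rw [Finset.sum_range_add]
  have h2 : ∑ i ∈ Finset.range N, wt a N i = 1 / 8 := by
    have : ∀ i ∈ Finset.range N, wt a N i = 1 / (8 * (N : ℝ)) := by
      intro i hi
      rw [wt, if_pos (Finset.mem_range.1 hi)]
    rw [Finset.sum_congr rfl this, Finset.sum_const, Finset.card_range, nsmul_eq_mul]
    have : (N : ℝ) ≠ 0 := by positivity
    field_simp
  have h3 : ∑ i ∈ Finset.range m, wt a N (N + i) = ∑ i ∈ Finset.range m, a i := by
    apply Finset.sum_congr rfl
    intro i _
    rw [wt, if_neg (by omega)]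
    congr 1
    omega
  rw [h2, h3]
  linarith [hs m]

lemma wt_HP (a : ℕ → ℝ) (N K : ℕ) (u : ℝ) : HI (wt a N) u ≤ HP a K u := by
  refine (HI_le _ (N + K) u).trans ?_
  have : HP (wt a N) (N + K) u = HP (wt a N) N u * HP a K u := by
    unfold HP
    rw [Finset.prod_range_add]
    congr 1
    apply Finset.prod_congr rfl
    intro i _
    rw [wt, if_neg (by omega)]
    congr 4
    omega
  rw [this]
  exact mul_le_of_le_one_left (HP_nonneg _ _ _) (HP_le_one _ _ _)

lemma wt_moment (a : ℕ → ℝ) (N : ℕ) (hN : 0 < N) (j : ℕ) (hj : j ≤ N) (u : ℝ) :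
    (1 + |u|) ^ j * HI (wt a N) u ≤ (9 * (N : ℝ)) ^ j := by
  have hN1 : (1 : ℝ) ≤ N := by exact_mod_cast hN
  set s : ℝ := |Real.sinc (1 / (8 * (N : ℝ)) * u)| with hs
  have hs1 : s ≤ 1 := Real.abs_sinc_le_one _
  have hs0 : 0 ≤ s := abs_nonneg _
  have h1 : HI (wt a N) u ≤ s ^ j := by
    refine (HI_le _ N u).trans ?_
    have : HP (wt a N) N u = (s ^ 2) ^ N := by
      unfold HP
      have : ∀ i ∈ Finset.range N, Real.sinc (wt a N i * u) ^ 2 = s ^ 2 := by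
        intro i hi
        rw [wt, if_pos (Finset.mem_range.1 hi), hs, sq_abs]
      rw [Finset.prod_congr rfl this, Finset.prod_const, Finset.card_range]
    rw [this, ← pow_mul]
    exact pow_le_pow_of_le_one hs0 hs1 (by omega)
  have h2 : (1 + |u|) * s ≤ 9 * N := by
    have h3 := abs_mul_sinc_le (1 / (8 * (N : ℝ)) * u)
    rw [← hs, abs_mul, abs_of_pos (by positivity)] at h3
    have h4 : |u| * s ≤ 8 * N := by
      have : |u| * s = 8 * N * (1 / (8 * (N : ℝ)) * |u| * s) := by field_simp
      rw [this]
      exact mul_le_of_le_one_right (by positivity) h3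
    linarith
  calc (1 + |u|) ^ j * HI (wt a N) u ≤ (1 + |u|) ^ j * s ^ j := by gcongr
    _ = ((1 + |u|) * s) ^ j := by rw [mul_pow]
    _ ≤ _ := by gcongr

lemma base_moment (q : ℝ → ℝ) (hc : Continuous q) (h0 : ∀ x, 0 ≤ q x)
    (hm : ∀ k : ℕ, Integrable (fun x => |x| ^ k * q x)) (k : ℕ) :
    Integrable (fun x => (1 + |x|) ^ k * q x) := by
  have h1 : Integrable q := by simpa using hm 0
  refine ((h1.add (hm k)).const_mul (2 ^ (k - 1))).mono' (by fun_prop) ?_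
  refine Filter.Eventually.of_forall fun x => ?_
  rw [Real.norm_eq_abs, abs_of_nonneg (mul_nonneg (by positivity) (h0 x))]
  have h2 := add_pow_le (zero_le_one) (abs_nonneg x) k
  rw [one_pow] at h2
  calc _ ≤ 2 ^ (k - 1) * (1 + |x| ^ k) * q x := mul_le_mul_of_nonneg_right h2 (h0 x)
    _ = _ := by
      simp only [Pi.add_apply]
      ring

end Stmt2Aux

open Stmt2Aux in
/-- Lemma 3.2: existence of a sequence of real-valued Schwartz test functions `φ_n` with
integral one, exponential decay `exp(-|y|^γ)`, non-negative `y·φ_n(y)`, Fourier transform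
supported in `[-1,1]` and controlled derivatives `|φ̂_n^{(j)}(t)| ≤ C A^j n^j` for `j ≤ n`. -/
theorem stmt_2 (γ : ℝ) (hγ0 : 0 < γ) (hγ1 : γ < 1) :
    ∃ (φ : ℕ → SchwartzMap ℝ ℝ) (Cγ C A : ℝ), 0 < Cγ ∧ 0 < C ∧ 0 < A ∧ A = 124 ∧
      ∀ n : ℕ,
        (∫ y, φ n y) = 1 ∧
        (∀ y : ℝ, |φ n y| ≤ Cγ * Real.exp (-(|y| ^ γ))) ∧
        (∀ y : ℝ, 0 ≤ y * φ n y) ∧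
        (∀ t : ℝ, 1 < |t| →
          (∫ x : ℝ, Complex.exp (-(↑(t * x)) * Complex.I) * (φ n x : ℂ)) = 0) ∧
        (∀ j ≤ n, ∀ t ∈ Set.Icc (-1:ℝ) 1,
          ‖iteratedDeriv j
              (fun t' : ℝ => ∫ x : ℝ, Complex.exp (-(↑(t' * x)) * Complex.I) * (φ n x : ℂ))
              t‖ ≤ C * A ^ j * (n : ℝ) ^ j) := by
  obtain ⟨q, hqc, hq0, hqe, hqp, hqm', ⟨B, hB⟩, hqft⟩ := base_exists
  obtain ⟨a, ha0, has, D, hD, hdec⟩ := weights_exist γ hγ0 hγ1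
  have hqm := base_moment q hqc hq0 hqm'
  have hqi : Integrable q := by simpa using hqm 0
  have hBpos : 0 < B := by
    have := hB 0
    simp only [abs_zero, add_zero, one_mul] at this
    linarith
  set κ0 : ℝ := 1 / 2 * ∫ x in Set.Icc (-1 : ℝ) 1, q x with hκ0
  have hκ0p : 0 < κ0 := by
    have h1 : 0 < ∫ x in Set.Icc (-1 : ℝ) 1, q x := by
      rw [integral_Icc_eq_integral_Ioc, ← intervalIntegral.integral_of_le (by norm_num)]
      exact intervalIntegral.integral_pos (by norm_num) hqc.continuousOn (fun x _ => hq0 x)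
        ⟨0, by norm_num, hqp⟩
    positivity
  set M : ℝ := ∫ x, (1 + |x|) ^ 1 * q x with hM
  have hM0 : 0 ≤ M := integral_nonneg fun x => mul_nonneg (by positivity) (hq0 x)
  let W : ℕ → ℕ → ℝ := fun n => wt a (n + 1)
  have hW0 : ∀ n i, 0 ≤ W n i := fun n i => wt_nonneg a ha0 _ i
  have hWs : ∀ n m, ∑ i ∈ Finset.range m, W n i ≤ 1 / 4 :=
    fun n m => wt_sum a ha0 has _ (Nat.succ_pos n) m
  have hWc : ∀ n, Continuous (HI (W n)) := fun n => HI_cont _ (hW0 n) (hWs n)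
  let Q : ℕ → ℝ → ℝ := fun n x => q x * HI (W n) x
  have hQc : ∀ n, Continuous (Q n) := fun n => hqc.mul (hWc n)
  have hQ0 : ∀ n x, 0 ≤ Q n x := fun n x => mul_nonneg (hq0 x) (HI_nonneg _ _)
  have hQe : ∀ n x, Q n (-x) = Q n x := by
    intro n x
    simp only [Q, hqe, HI_even]
  have hQm : ∀ n (k : ℕ), Integrable (fun x => (1 + |x|) ^ k * Q n x) := by
    intro n k
    have e : (fun x => (1 + |x|) ^ k * Q n x) = fun x => (1 + |x|) ^ k * q x * HI (W n) x := by
      ext x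
      simp only [Q]
      ring
    rw [e]
    apply Integrable.mul_bdd (c := 1) (hqm k) (hWc n).aestronglyMeasurable
    refine Filter.Eventually.of_forall fun x => ?_
    rw [Real.norm_eq_abs, abs_of_nonneg (HI_nonneg _ _)]
    exact HI_le_one _ _
  have hQft : ∀ n t, 1 < |t| → ft (fun x => (Q n x : ℂ)) t = 0 :=
    fun n t ht => ft_HI q (W n) (hW0 n) (hWs n) hqi hqft t ht
  have hκ : ∀ n, κ0 ≤ ∫ x, Q n x := by
    intro n
    have hQi : Integrable (Q n) := by simpa using hQm n 0
    calc κ0 = ∫ x in Set.Icc (-1 : ℝ) 1, 1 / 2 * q x := by rw [integral_const_mul]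
      _ ≤ ∫ x in Set.Icc (-1 : ℝ) 1, Q n x := by
        apply setIntegral_mono_on (hqi.const_mul _).integrableOn hQi.integrableOn
          measurableSet_Icc
        intro x hx
        have := HI_ge (W n) (hW0 n) (hWs n) x (abs_le.2 hx)
        simp only [Q]
        nlinarith [hq0 x]
      _ ≤ _ := setIntegral_le_integral hQi (Filter.Eventually.of_forall fun x => hQ0 n x)
  have hκp : ∀ n, 0 < ∫ x, Q n x := fun n => hκ0p.trans_le (hκ n)
  have hκi : ∀ n, (∫ x, Q n x)⁻¹ ≤ κ0⁻¹ := fun n => inv_anti₀ hκ0p (hκ n)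
  choose φ hφ hφ1 hφft hφd using fun n =>
    phi_exists (Q n) (hQc n) (hQ0 n) (hQe n) (hQm n) (hQft n) _ rfl (hκp n)
  refine ⟨φ, κ0⁻¹ * (B * D), κ0⁻¹ * M + 1, 124, by positivity, by positivity, by norm_num, rfl,
    fun n => ⟨hφ1 n, ?_, ?_, hφft n, ?_⟩⟩
  · intro y
    rw [hφ]
    have hi := hκp n
    rw [abs_mul, abs_mul, abs_of_pos (inv_pos.2 hi), abs_of_nonneg (hQ0 n _)]
    set u := y - 1 with hu
    have hy : |y| ≤ 1 + |u| := by
      have := abs_add_le 1 u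
      rw [abs_one, hu, add_sub_cancel] at this
      exact this
    obtain ⟨K, hK⟩ := hdec u
    have h1 : HI (W n) u ≤ D * Real.exp (-((1 + |u|) ^ γ)) := (wt_HP a (n + 1) K u).trans hK
    have h2 : Real.exp (-((1 + |u|) ^ γ)) ≤ Real.exp (-(|y| ^ γ)) := by
      rw [Real.exp_le_exp, neg_le_neg_iff]
      exact Real.rpow_le_rpow (abs_nonneg _) hy hγ0.le
    have h3 : HI (W n) u ≤ D * Real.exp (-(|y| ^ γ)) := h1.trans (by gcongr)
    have h4 : |y| * q u ≤ B := (mul_le_mul_of_nonneg_right hy (hq0 u)).trans (hB u)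
    have h5 : |y| * Q n u ≤ B * (D * Real.exp (-(|y| ^ γ))) := by
      simp only [Q]
      rw [← mul_assoc]
      exact mul_le_mul h4 h3 (HI_nonneg _ _) hBpos.le
    calc _ ≤ κ0⁻¹ * (B * (D * Real.exp (-(|y| ^ γ)))) :=
          mul_le_mul (hκi n) h5 (mul_nonneg (abs_nonneg _) (hQ0 n u)) (by positivity)
      _ = _ := by ring
  · intro y
    rw [hφ]
    have hi := hκp n
    have h1 : y * ((∫ x, Q n x)⁻¹ * (y * Q n (y - 1)))
      = (∫ x, Q n x)⁻¹ * (y ^ 2 * Q n (y - 1)) := by ring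
    rw [h1]
    have := hQ0 n (y - 1)
    positivity
  · intro j hj t _
    refine (hφd n j t).trans ?_
    have h1 : ∫ u, (1 + |u|) ^ (j + 1) * Q n u ≤ M * (9 * ((n + 1 : ℕ) : ℝ)) ^ j := by
      rw [hM, ← integral_mul_const]
      apply integral_mono (hQm n (j + 1)) ((hqm 1).mul_const _)
      intro u
      have h2 := wt_moment a (n + 1) (Nat.succ_pos n) j (by omega) u
      have h3 : 0 ≤ (1 + |u|) ^ 1 * q u := mul_nonneg (by positivity) (hq0 u)
      calc (1 + |u|) ^ (j + 1) * Q n u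
          = (1 + |u|) ^ 1 * q u * ((1 + |u|) ^ j * HI (wt a (n + 1)) u) := by
            simp only [Q, W]
            ring
        _ ≤ _ := mul_le_mul_of_nonneg_left h2 h3
    have h2 : (9 * ((n + 1 : ℕ) : ℝ)) ^ j ≤ (124 * (n : ℝ)) ^ j := by
      rcases Nat.eq_zero_or_pos n with h | h
      · have : j = 0 := by omega
        simp [this]
      · have h3 : (1 : ℝ) ≤ n := by exact_mod_cast h
        apply pow_le_pow_left₀ (by positivity)
        push_cast
        linarith
    have hi := hκp n
    calc _ ≤ κ0⁻¹ * (M * (124 * (n : ℝ)) ^ j) := by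
          apply mul_le_mul (hκi n) (h1.trans (by gcongr)) _ (by positivity)
          exact integral_nonneg fun u => mul_nonneg (by positivity) (hQ0 n u)
      _ = κ0⁻¹ * M * (124 * (n : ℝ)) ^ j := by ring
      _ ≤ (κ0⁻¹ * M + 1) * (124 * (n : ℝ)) ^ j := by
          gcongr
          linarith
      _ = _ := by
          rw [mul_pow]
          ring
end
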